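/- Let G be a bipartite graph with bipartition (L, R) and let M be a maximum matching in G. Let P_L* be the set of M-free vertices of L, let P_L (respectively P_R) be the set of M-matched vertices of L (respectively R) reachable from P_L* by an M-alternating path starting with a non-matching edge, let Q_R* be the set of M-free vertices of R, and let Q_R be the set of M-matched vertices of R not reachable from P_L* by such a path. Then G contains no edge between P_L* ∪ P_L and Q_R* ∪ Q_R. -/

import Mathlib

/-- A vertex is `M`-free if it lies on no edge of the matching `M`. -/
def MFree {V : Type*} (M : Finset (Sym2 V)) (v : V) : Prop :=
  ∀ e ∈ M, v ∉ e

/-- `v` is reachable from a free vertex of `L` by an `M`-alternating path that starts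
with a non-matching edge (edges at even positions are outside `M`, edges at odd
positions are in `M`). -/
def AltReach {V : Type*} (G : SimpleGraph V) (L : Set V) (M : Finset (Sym2 V)) (v : V) :
    Prop :=
  ∃ (k : ℕ) (p : ℕ → V), p 0 ∈ L ∧ MFree M (p 0) ∧ p k = v ∧
    (∀ i < k, G.Adj (p i) (p (i + 1))) ∧
    (∀ i < k, (s(p i, p (i + 1)) ∈ M ↔ i % 2 = 1)) ∧
    (∀ i ≤ k, ∀ j ≤ k, p i = p j → i = j)

/-! The neighbour `v` of a reachable vertex `u ∈ L` is reachable: either `v` already lies on the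
alternating path to `u`, or that path, whose length is even, extends by the non-matching edge `uv`.
A reachable vertex of `R` ends an alternating path of odd length from a free vertex, so if it were
free that path would be augmenting. An augmenting path is unwound two edges at a time: replacing its
second edge by its first one moves the free vertex forward without changing the size of the
matching, until one edge with two free endpoints is left. -/

section Matching

variable {V : Type*} {G : SimpleGraph V} {M : Finset (Sym2 V)} {a b c v : V}

/-- `M` is a matching of `G`, given as a finite set of pairwise disjoint edges of a possibly
infinite graph, rather than as a subgraph. -/
structure IsEdgeMatching (G : SimpleGraph V) (M : Finset (Sym2 V)) : Prop where
  subset_edgeSet : ↑M ⊆ G.edgeSet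
  disjoint : ∀ e ∈ M, ∀ f ∈ M, e ≠ f → ∀ v : V, v ∈ e → v ∉ f

/-- `M` is a matching of `G` of largest cardinality among the finite matchings of `G`. -/
structure IsMaximumEdgeMatching (G : SimpleGraph V) (M : Finset (Sym2 V)) : Prop
    extends IsEdgeMatching G M where
  card_le : ∀ M' : Finset (Sym2 V), IsEdgeMatching G M' → M'.card ≤ M.card

theorem IsEdgeMatching.eq_of_mem (hM : IsEdgeMatching G M) {e f : Sym2 V} (he : e ∈ M)
    (hf : f ∈ M) (hve : v ∈ e) (hvf : v ∈ f) : e = f :=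
  by_contra fun hne => hM.disjoint e he f hf hne v hve hvf

variable [DecidableEq V]

protected theorem IsEdgeMatching.insert (hM : IsEdgeMatching G M) (hab : G.Adj a b)
    (ha : MFree M a) (hb : MFree M b) : IsEdgeMatching G (insert s(a, b) M) := by
  have hdisj : ∀ f ∈ M, ∀ v ∈ s(a, b), v ∉ f := by
    intro f hf v hv
    rcases Sym2.mem_iff.1 hv with rfl | rfl
    exacts [ha f hf, hb f hf]
  refine ⟨?_, fun e he f hf hne v hve hvf => ?_⟩
  · rw [Finset.coe_insert]
    exact Set.insert_subset hab hM.subset_edgeSet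
  · rcases Finset.mem_insert.1 he with rfl | he <;> rcases Finset.mem_insert.1 hf with rfl | hf
    · exact hne rfl
    · exact hdisj f hf v hve hvf
    · exact hdisj e he v hvf hve
    · exact hM.disjoint e he f hf hne v hve hvf

protected theorem IsEdgeMatching.erase (hM : IsEdgeMatching G M) (e : Sym2 V) :
    IsEdgeMatching G (M.erase e) where
  subset_edgeSet _ hf := hM.subset_edgeSet (Finset.mem_of_mem_erase hf)
  disjoint _ he _ hf := hM.disjoint _ (Finset.mem_of_mem_erase he) _ (Finset.mem_of_mem_erase hf)

theorem IsEdgeMatching.mFree_erase (hM : IsEdgeMatching G M) {e : Sym2 V} (he : e ∈ M)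
    (hv : v ∈ e) : MFree (M.erase e) v :=
  fun _ hf => hM.disjoint e he _ (Finset.mem_of_mem_erase hf) (Finset.ne_of_mem_erase hf).symm v hv

protected theorem MFree.erase (hv : MFree M v) (e : Sym2 V) : MFree (M.erase e) v :=
  fun f hf => hv f (Finset.mem_of_mem_erase hf)

protected theorem MFree.insert (hv : MFree M v) {e : Sym2 V} (he : v ∉ e) : MFree (insert e M) v :=
  Finset.forall_mem_insert _ _ _ |>.2 ⟨he, hv⟩

theorem MFree.card_insert (ha : MFree M a) (b : V) : (insert s(a, b) M).card = M.card + 1 :=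
  Finset.card_insert_of_notMem fun h => ha _ h (Sym2.mem_mk_left a b)

/-- Replaces the edge `bc` of `M` by `ab`. When `M` is a matching that leaves `a` free, this gives
a matching of the same size in which `c` is free instead of `a`. -/
def slideEdge (M : Finset (Sym2 V)) (a b c : V) : Finset (Sym2 V) :=
  insert s(a, b) (M.erase s(b, c))

protected theorem IsEdgeMatching.slideEdge (hM : IsEdgeMatching G M) (hab : G.Adj a b)
    (hbc : s(b, c) ∈ M) (ha : MFree M a) : IsEdgeMatching G (slideEdge M a b c) :=
  (hM.erase _).insert hab (ha.erase _) (hM.mFree_erase hbc (Sym2.mem_mk_left b c))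

theorem card_slideEdge (hbc : s(b, c) ∈ M) (ha : MFree M a) :
    (slideEdge M a b c).card = M.card := by
  rw [slideEdge, (ha.erase _).card_insert, Finset.card_erase_add_one hbc]

theorem IsEdgeMatching.mFree_slideEdge (hM : IsEdgeMatching G M) (hbc : s(b, c) ∈ M)
    (hc : c ∉ s(a, b)) : MFree (slideEdge M a b c) c :=
  (hM.mFree_erase hbc (Sym2.mem_mk_right b c)).insert hc

protected theorem MFree.slideEdge (hv : MFree M v) (hvab : v ∉ s(a, b)) (c : V) :
    MFree (slideEdge M a b c) v :=
  (hv.erase _).insert hvab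

theorem mem_slideEdge_iff_of_notMem {e : Sym2 V} (hb : b ∉ e) :
    e ∈ slideEdge M a b c ↔ e ∈ M := by
  have hab : e ≠ s(a, b) := fun h => hb (h ▸ Sym2.mem_mk_right a b)
  have hbc : e ≠ s(b, c) := fun h => hb (h ▸ Sym2.mem_mk_left b c)
  simp only [slideEdge, Finset.mem_insert, Finset.mem_erase, hab, hbc, false_or, ne_eq,
    not_false_eq_true, true_and]

end Matching

section AltPath

variable {V : Type*} {G : SimpleGraph V} {L R : Set V} {M : Finset (Sym2 V)} {p : ℕ → V}
  {k : ℕ} {u v : V}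

/-- The vertices `p 0, …, p k` form an `M`-alternating path of `G` with `k` edges that starts with a
non-matching edge. The values of `p` beyond `k` are irrelevant. -/
structure IsAltPath (G : SimpleGraph V) (M : Finset (Sym2 V)) (p : ℕ → V) (k : ℕ) : Prop where
  adj : ∀ i < k, G.Adj (p i) (p (i + 1))
  mem_iff : ∀ i < k, (s(p i, p (i + 1)) ∈ M ↔ i % 2 = 1)
  injOn : Set.InjOn p (Set.Iic k)

theorem altReach_iff_exists_isAltPath :
    AltReach G L M v ↔ ∃ k p, p 0 ∈ L ∧ MFree M (p 0) ∧ p k = v ∧ IsAltPath G M p k :=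
  exists₂_congr fun _ _ => and_congr_right' <| and_congr_right' <| and_congr_right'
    ⟨fun h => ⟨h.1, h.2.1, fun i hi j hj => h.2.2 i hi j hj⟩,
      fun h => ⟨h.adj, h.mem_iff, fun _ hi _ hj => h.injOn hi hj⟩⟩

protected theorem IsAltPath.ne (hp : IsAltPath G M p k) {i j : ℕ} (hi : i ≤ k) (hj : j ≤ k)
    (hij : i ≠ j) : p i ≠ p j :=
  hp.injOn.ne hi hj hij

theorem IsAltPath.take (hp : IsAltPath G M p k) {j : ℕ} (hj : j ≤ k) : IsAltPath G M p j where
  adj i hi := hp.adj i (hi.trans_le hj)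
  mem_iff i hi := hp.mem_iff i (hi.trans_le hj)
  injOn := hp.injOn.mono (Set.Iic_subset_Iic.2 hj)

theorem IsAltPath.snoc (hp : IsAltPath G M p k) (hadj : G.Adj (p k) v)
    (hmem : s(p k, v) ∈ M ↔ k % 2 = 1) (hv : ∀ j ≤ k, p j ≠ v) :
    IsAltPath G M (Function.update p (k + 1) v) (k + 1) := by
  have hlast : Function.update p (k + 1) v (k + 1) = v := Function.update_self ..
  have hinit : Set.EqOn p (Function.update p (k + 1) v) (Set.Iic k) := fun i hi =>
    (Function.update_of_ne (Nat.lt_succ_of_le hi).ne _ _).symm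
  refine ⟨fun i hi => ?_, fun i hi => ?_, ?_⟩
  · rcases Nat.lt_succ_iff_lt_or_eq.1 hi with hi | rfl
    · rw [← hinit hi.le, ← hinit (Nat.succ_le_of_lt hi)]
      exact hp.adj i hi
    · rwa [hlast, ← hinit Set.self_mem_Iic]
  · rcases Nat.lt_succ_iff_lt_or_eq.1 hi with hi | rfl
    · rw [← hinit hi.le, ← hinit (Nat.succ_le_of_lt hi)]
      exact hp.mem_iff i hi
    · rwa [hlast, ← hinit Set.self_mem_Iic]
  · have hIic : Set.Iic (k + 1) = insert (k + 1) (Set.Iic k) := Order.Iic_succ k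
    rw [hIic, Set.injOn_insert (by simp), ← hinit.injOn_iff, ← hinit.image_eq, hlast]
    exact ⟨hp.injOn, fun ⟨j, hj, hjv⟩ => hv j hj hjv⟩

theorem IsAltPath.notMem_of_even (hp : IsAltPath G M p k) (hM : IsEdgeMatching G M)
    (hfree : MFree M (p 0)) (hk : k % 2 = 0) (hv : ∀ j ≤ k, p j ≠ v) : s(p k, v) ∉ M := by
  intro hmem
  rcases k with _ | k
  · exact hfree _ hmem (Sym2.mem_mk_left _ _)
  · have hprev : s(p k, p (k + 1)) ∈ M := (hp.mem_iff k (by omega)).2 (by omega)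
    have heq : s(p (k + 1), v) = s(p k, p (k + 1)) :=
      hM.eq_of_mem hmem hprev (Sym2.mem_mk_left _ _) (Sym2.mem_mk_right _ _)
    rw [Sym2.eq_swap, Sym2.congr_left] at heq
    exact hv k k.le_succ heq.symm

protected theorem IsAltPath.slideEdge [DecidableEq V] (hp : IsAltPath G M p (k + 2)) :
    IsAltPath G (slideEdge M (p 0) (p 1) (p 2)) (fun i => p (i + 2)) k where
  adj i hi := hp.adj (i + 2) (by omega)
  mem_iff i hi := by
    have hnot : p 1 ∉ s(p (i + 2), p (i + 2 + 1)) := by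
      rw [Sym2.mem_iff, not_or]
      exact ⟨hp.ne (by omega) (by omega) (by omega), hp.ne (by omega) (by omega) (by omega)⟩
    rw [show i + 1 + 2 = i + 2 + 1 by omega, mem_slideEdge_iff_of_notMem hnot,
      hp.mem_iff (i + 2) (by omega), Nat.add_mod_right]
  injOn i hi j hj h := by
    simpa using hp.injOn (Nat.add_le_add_right hi 2) (Nat.add_le_add_right hj 2) h

theorem IsAltPath.exists_isEdgeMatching_card_eq_add_one (hp : IsAltPath G M p k)
    (hM : IsEdgeMatching G M) (hk : k % 2 = 1) (hfirst : MFree M (p 0)) (hlast : MFree M (p k)) :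
    ∃ M', IsEdgeMatching G M' ∧ M'.card = M.card + 1 := by
  classical
  induction k using Nat.twoStepInduction generalizing M p with
  | zero => omega
  | one => exact ⟨_, hM.insert (hp.adj 0 one_pos) hfirst hlast, hfirst.card_insert _⟩
  | more k ih _ =>
    have hmem : s(p 1, p 2) ∈ M := (hp.mem_iff 1 (by omega)).2 rfl
    have hnot : ∀ i ≤ k + 2, 2 ≤ i → p i ∉ s(p 0, p 1) := fun i hi h2 => by
      rw [Sym2.mem_iff, not_or]
      exact ⟨hp.ne hi (by omega) (by omega), hp.ne hi (by omega) (by omega)⟩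
    rw [← card_slideEdge hmem hfirst]
    exact ih hp.slideEdge (hM.slideEdge (hp.adj 0 (by omega)) hmem hfirst) (by omega)
      (hM.mFree_slideEdge hmem (hnot 2 (by omega) le_rfl))
      (hlast.slideEdge (hnot (k + 2) le_rfl (by omega)) _)

theorem mem_left_iff_notMem_left_of_adj (hG : G.IsBipartiteWith L R) (huv : G.Adj u v) :
    v ∈ L ↔ u ∉ L := by
  rcases hG.mem_of_adj huv with ⟨hu, hv⟩ | ⟨hu, hv⟩
  · exact iff_of_false (hG.disjoint.notMem_of_mem_right hv) (not_not_intro hu)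
  · exact iff_of_true hv (hG.disjoint.notMem_of_mem_right hu)

theorem IsAltPath.mem_left_iff_even (hp : IsAltPath G M p k) (hG : G.IsBipartiteWith L R)
    (h0 : p 0 ∈ L) : p k ∈ L ↔ k % 2 = 0 := by
  induction k with
  | zero => exact iff_of_true h0 rfl
  | succ k ih =>
    rw [mem_left_iff_notMem_left_of_adj hG (hp.adj k k.lt_succ_self), ih (hp.take k.le_succ)]
    omega

theorem altReach_of_mFree (hv : v ∈ L) (hfree : MFree M v) : AltReach G L M v :=
  ⟨0, fun _ => v, hv, hfree, rfl, by simp, by simp, by omega⟩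

theorem AltReach.of_adj (hreach : AltReach G L M u) (hG : G.IsBipartiteWith L R)
    (hM : IsEdgeMatching G M) (hu : u ∈ L) (huv : G.Adj u v) : AltReach G L M v := by
  rw [altReach_iff_exists_isAltPath] at hreach ⊢
  obtain ⟨k, p, h0, hfree, rfl, hp⟩ := hreach
  by_cases hv : ∃ j ≤ k, p j = v
  · obtain ⟨j, hj, rfl⟩ := hv
    exact ⟨j, p, h0, hfree, rfl, hp.take hj⟩
  · push Not at hv
    have hk : k % 2 = 0 := (hp.mem_left_iff_even hG h0).1 hu
    have hmem : s(p k, v) ∈ M ↔ k % 2 = 1 :=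
      iff_of_false (hp.notMem_of_even hM hfree hk hv) (by omega)
    exact ⟨k + 1, Function.update p (k + 1) v, by simpa using h0, by simpa using hfree,
      Function.update_self .., hp.snoc huv hmem hv⟩

theorem AltReach.not_mFree (hreach : AltReach G L M v) (hG : G.IsBipartiteWith L R)
    (hM : IsMaximumEdgeMatching G M) (hv : v ∈ R) : ¬ MFree M v := by
  intro hlast
  obtain ⟨k, p, h0, hfirst, rfl, hp⟩ := altReach_iff_exists_isAltPath.1 hreach
  have hk : k % 2 = 1 := Nat.mod_two_ne_zero.1 fun hk =>
    hG.disjoint.notMem_of_mem_right hv ((hp.mem_left_iff_even hG h0).2 hk)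
  obtain ⟨M', hM', hcard⟩ :=
    hp.exists_isEdgeMatching_card_eq_add_one hM.toIsEdgeMatching hk hfirst hlast
  exact (hM.card_le M' hM').not_gt (hcard ▸ M.card.lt_succ_self)

end AltPath

theorem stmt9_general {V : Type*} {G : SimpleGraph V} {L R : Set V} (hG : G.IsBipartiteWith L R)
    {M : Finset (Sym2 V)} (hM : IsMaximumEdgeMatching G M) :
    ∀ u v : V, G.Adj u v →
      u ∈ {x | x ∈ L ∧ MFree M x} ∪ {x | x ∈ L ∧ ¬ MFree M x ∧ AltReach G L M x} →
      v ∉ {x | x ∈ R ∧ MFree M x} ∪ {x | x ∈ R ∧ ¬ MFree M x ∧ ¬ AltReach G L M x} := by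
  intro u v huv hu hv
  have huL : u ∈ L := hu.elim And.left And.left
  have hureach : AltReach G L M u := hu.elim (fun h => altReach_of_mFree h.1 h.2) fun h => h.2.2
  have hvreach : AltReach G L M v := hureach.of_adj hG hM.toIsEdgeMatching huL huv
  rcases hv with ⟨hvR, hvfree⟩ | ⟨-, -, hvnot⟩
  · exact hvreach.not_mFree hG hM hvR hvfree
  · exact hvnot hvreach

/-- Let `G` be bipartite with bipartition `(L, R)` and let `M` be a
maximum matching in `G`.  With `P_L*` the free vertices of `L`, `P_L` (resp. `P_R`) the
matched vertices of `L` (resp. `R`) reachable from `P_L*` by an alternating path starting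
with a non-matching edge, `Q_R*` the free vertices of `R`, and `Q_R` the matched vertices
of `R` not so reachable, `G` contains no edge between `P_L* ∪ P_L` and `Q_R* ∪ Q_R`. -/
theorem stmt9 {V : Type*} [Fintype V] (G : SimpleGraph V) (L R : Set V)
    (hLR : ∀ v : V, v ∈ L ↔ v ∉ R)
    (hbip : ∀ u v : V, G.Adj u v → (u ∈ L ∧ v ∈ R) ∨ (u ∈ R ∧ v ∈ L))
    (M : Finset (Sym2 V)) (hM : ↑M ⊆ G.edgeSet)
    (hmatch : ∀ e ∈ M, ∀ f ∈ M, e ≠ f → ∀ v : V, v ∈ e → v ∉ f)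
    (hmax : ∀ M' : Finset (Sym2 V), ↑M' ⊆ G.edgeSet →
      (∀ e ∈ M', ∀ f ∈ M', e ≠ f → ∀ v : V, v ∈ e → v ∉ f) → M'.card ≤ M.card) :
    ∀ u v : V, G.Adj u v →
      u ∈ {x | x ∈ L ∧ MFree M x} ∪ {x | x ∈ L ∧ ¬ MFree M x ∧ AltReach G L M x} →
      v ∉ {x | x ∈ R ∧ MFree M x} ∪ {x | x ∈ R ∧ ¬ MFree M x ∧ ¬ AltReach G L M x} :=
  stmt9_general ⟨Set.disjoint_left.2 fun v => (hLR v).1, hbip⟩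
    ⟨⟨hM, hmatch⟩, fun M' h => hmax M' h.1 h.2⟩
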